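/- arXiv:2309.11347 — 2 statements merged into one kernel-verified Lean document; each statement's English description precedes it below -/
import Mathlib

section
/- Let S be a Tychonoff pseudocompact right topological monoid, X a Tychonoff pseudocompact space, and π : S × X → X a separately continuous and quasicontinuous action. Then for every unit u of S, π is jointly continuous at every point of {u} × X. -/
open Filter Topology Set

/-- A space is pseudocompact if every continuous real-valued function on it is bounded. -/
def IsPseudocompact (X : Type*) [TopologicalSpace X] : Prop :=
  ∀ f : X → ℝ, Continuous f → ∃ M : ℝ, ∀ x : X, |f x| ≤ M

/-- A function is quasicontinuous. -/
def QuasiContinuous {X Y : Type*} [TopologicalSpace X] [TopologicalSpace Y] (f : X → Y) : Prop :=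
  ∀ x : X, ∀ V : Set Y, IsOpen V → f x ∈ V → ∀ U : Set X, IsOpen U → x ∈ U →
    ∃ W : Set X, IsOpen W ∧ W.Nonempty ∧ W ⊆ U ∧ f '' W ⊆ V

/-- Separate continuity of a function of two variables. -/
def SeparatelyContinuous {X Y Z : Type*} [TopologicalSpace X] [TopologicalSpace Y]
    [TopologicalSpace Z] (f : X × Y → Z) : Prop :=
  (∀ x : X, Continuous fun y : Y => f (x, y)) ∧ (∀ y : Y, Continuous fun x : X => f (x, y))

/-- The space of continuous real-valued functions with the topology of pointwise
convergence, realized as a subspace of the product `Y → ℝ`. -/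
def Cp (Y : Type*) [TopologicalSpace Y] : Type _ := {g : Y → ℝ // Continuous g}

noncomputable instance (Y : Type*) [TopologicalSpace Y] : TopologicalSpace (Cp Y) :=
  instTopologicalSpaceSubtype

/-- `(X, Y)` is a Grothendieck pair if every continuous image of `X` in `C_p(Y)`
has compact closure in `C_p(Y)`. -/
def GrothendieckPair (X Y : Type*) [TopologicalSpace X] [TopologicalSpace Y] : Prop :=
  ∀ F : X → Cp Y, Continuous F → IsCompact (closure (Set.range F))

/-- `x` is a weak q-point relative to `A`. -/
def IsWeakQPoint {X : Type*} [TopologicalSpace X] (x : X) (A : Set X) : Prop :=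
  ∃ φ : List (Set X) → Set X,
    (∀ l : List (Set X), (∀ U ∈ l, IsOpen U ∧ x ∈ U) →
      φ l ⊆ A ∧ ∃ T : Set X, T.Countable ∧ φ l ⊆ closure T) ∧
    (∀ U : ℕ → Set X, (∀ i : ℕ, IsOpen (U i) ∧ x ∈ U i) →
      (closure (⋃ i : ℕ, φ ((List.range (i + 1)).map U)) ∩ ⋂ i : ℕ, U i).Nonempty)

/-- A weak `q_D`-space. -/
def IsWeakQDSpace (X : Type*) [TopologicalSpace X] : Prop :=
  ∃ D : Set X, Dense D ∧ ∀ A : Set X, A ⊆ D → ¬ IsClosed A → ∃ x : X, IsWeakQPoint x A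

/-! Feeble compactness turns an infinite play of a game on pairs of sets (`SeparatingMove`) into a
violation of an iterated limit condition for separately continuous maps, so every play stops. For a
quasicontinuous map, a position without moves yields *strong* quasicontinuity: near any `(s, x)` the
map takes values close to its value at `(s, x)` on some `T ×ˢ W`, where `T` is open and nonempty and
`W` is a neighborhood of `x` itself.

For an action, let `T ×ˢ W` be such a product near `(1, x)` and `t ∈ T`. For `(s, y)` close to
`(1, x)` one has `t * s ∈ T`, hence `π (t, π (s, y)) = π (t * s, y)` is close to `π (1, x)`. If `π`
were discontinuous at `(1, x)`, some such `π (s, y)` would be far from `π (1, x)` although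
`π (t, ·)` brings it back, and this would again allow moves forever. At a unit `u`, factor
`π (s, y) = π (u, π (u⁻¹ * s, y))`. -/

/-- Feeble compactness: every locally finite family of nonempty open sets is finite. Among
completely regular spaces this is pseudocompactness. Only sequences of open sets are quantified
over, since an infinite locally finite family contains a locally finite sequence. -/
def IsFeeblyCompact (X : Type*) [TopologicalSpace X] : Prop :=
  ∀ G : ℕ → Set X, (∀ n, IsOpen (G n)) → (∀ n, (G n).Nonempty) → ¬ LocallyFinite G

theorem IsFeeblyCompact.exists_forall_isClosed_mem {X : Type*} [TopologicalSpace X]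
    (hX : IsFeeblyCompact X) {G : ℕ → Set X} (hGo : ∀ n, IsOpen (G n))
    (hGne : ∀ n, (G n).Nonempty) :
    ∃ x, ∀ F : Set X, IsClosed F → (∀ᶠ n in atTop, G n ⊆ F) → x ∈ F := by
  have hG := hX G hGo hGne
  simp only [LocallyFinite, not_forall, not_exists, not_and] at hG
  obtain ⟨x, hx⟩ := hG
  refine ⟨x, fun F hF hGF => ?_⟩
  by_contra hxF
  refine hx Fᶜ (hF.isOpen_compl.mem_nhds hxF) ?_
  rw [← Nat.cofinite_eq_atTop, eventually_cofinite] at hGF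
  exact hGF.subset fun n hn hsub => inter_compl_nonempty_iff.mp hn hsub

theorem exists_continuous_nonneg_support_subset {X : Type*} [TopologicalSpace X]
    [CompletelyRegularSpace X] {U : Set X} (hU : IsOpen U) {x : X} (hx : x ∈ U) :
    ∃ f : X → ℝ, Continuous f ∧ 0 ≤ f ∧ f x = 1 ∧ Function.support f ⊆ U := by
  obtain ⟨f, hf, hfx, hfU⟩ := CompletelyRegularSpace.completely_regular_isOpen x U hU hx
  refine ⟨fun y => 1 - f y, by fun_prop, fun y => sub_nonneg.mpr (f y).2.2, by simp [hfx], ?_⟩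
  refine Function.support_subset_iff'.mpr fun y hy => ?_
  simp [hfU hy]

theorem IsPseudocompact.isFeeblyCompact {X : Type*} [TopologicalSpace X]
    [CompletelyRegularSpace X] (hX : IsPseudocompact X) : IsFeeblyCompact X := by
  intro G hGo hGne hG
  choose x hx using hGne
  choose f hfc hf0 hfx hfG using fun n => exists_continuous_nonneg_support_subset (hGo n) (hx n)
  have hlf : LocallyFinite fun n => Function.support fun y => n * f n y :=
    hG.subset fun n => (Function.support_mul_subset_right _ _).trans (hfG n)
  obtain ⟨M, hM⟩ := hX (fun y => ∑ᶠ n : ℕ, n * f n y)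
    (continuous_finsum (fun n => (hfc n).const_mul _) hlf)
  obtain ⟨n, hn⟩ := exists_nat_gt M
  refine hn.not_ge ?_
  calc (n : ℝ) = n * f n (x n) := by rw [hfx, mul_one]
    _ ≤ ∑ᶠ i : ℕ, i * f i (x n) := single_le_finsum n (hlf.point_finite (x n))
        fun i => mul_nonneg i.cast_nonneg (hf0 i (x n))
    _ ≤ M := (le_abs_self _).trans (hM (x n))

theorem exists_isClosed_mem_nhds_separatedNhds {Z : Type*} [TopologicalSpace Z] [RegularSpace Z]
    {z : Z} {O : Set Z} (hO : O ∈ 𝓝 z) :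
    ∃ A ∈ 𝓝 z, IsClosed A ∧ ∃ B ∈ 𝓝ˢ Oᶜ, IsClosed B ∧ SeparatedNhds A B := by
  obtain ⟨K, hK, hKc, hKO⟩ := exists_mem_nhds_isClosed_subset hO
  obtain ⟨L, hL, hLc, hLK⟩ := exists_mem_nhds_isClosed_subset (interior_mem_nhds.mpr hK)
  obtain ⟨A, hA, hAc, hAL⟩ := exists_mem_nhds_isClosed_subset (interior_mem_nhds.mpr hL)
  refine ⟨A, hA, hAc, (interior K)ᶜ, ?_, isOpen_interior.isClosed_compl, interior L, Lᶜ,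
    isOpen_interior, hLc.isOpen_compl, hAL, compl_subset_compl.mpr hLK,
    disjoint_compl_right.mono_left interior_subset⟩
  exact mem_nhdsSet_iff_exists.mpr ⟨Kᶜ, hKc.isOpen_compl, compl_subset_compl.mpr hKO,
    compl_subset_compl.mpr interior_subset⟩

theorem QuasiContinuous.comp_homeomorph {X Y Z : Type*} [TopologicalSpace X] [TopologicalSpace Y]
    [TopologicalSpace Z] {f : Y → Z} (hf : QuasiContinuous f) (e : X ≃ₜ Y) :
    QuasiContinuous (f ∘ e) := by
  intro x V hV hxV U hU hxU
  obtain ⟨W, hW, hWne, hWU, hWV⟩ := hf (e x) V hV hxV (e '' U) (e.isOpenMap U hU)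
    (mem_image_of_mem e hxU)
  refine ⟨e ⁻¹' W, hW.preimage e.continuous, hWne.preimage e.surjective, ?_, ?_⟩
  · exact (preimage_mono hWU).trans (e.injective.preimage_image U).subset
  · rwa [image_comp, e.surjective.image_preimage]

section

variable {S X Z : Type*} [TopologicalSpace S] [TopologicalSpace X] [TopologicalSpace Z]
  {f : S × X → Z} {A B : Set Z}

theorem QuasiContinuous.exists_mapsTo_prod (hf : QuasiContinuous f) {s : S} {x : X}
    {V : Set Z} (hV : V ∈ 𝓝 (f (s, x))) {T : Set S} (hT : T ∈ 𝓝 s) {W : Set X} (hW : W ∈ 𝓝 x) :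
    ∃ T' ⊆ T, IsOpen T' ∧ T'.Nonempty ∧ ∃ W' ⊆ W, IsOpen W' ∧ W'.Nonempty ∧
      MapsTo f (T' ×ˢ W') V := by
  obtain ⟨R, hR, ⟨⟨s', x'⟩, hR'⟩, hRTW, hRV⟩ := hf (s, x) (interior V) isOpen_interior
    (mem_interior_iff_mem_nhds.mpr hV) (interior (T ×ˢ W)) isOpen_interior
    (mem_interior_iff_mem_nhds.mpr (prod_mem_nhds hT hW))
  obtain ⟨T', W', hT', hW', hsT', hxW', hTW⟩ := isOpen_prod_iff.mp hR s' x' hR'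
  have hsub : T' ×ˢ W' ⊆ T ×ˢ W := hTW.trans (hRTW.trans interior_subset)
  exact ⟨T', fun t ht => (hsub (mk_mem_prod ht hxW')).1, hT', ⟨s', hsT'⟩,
    W', fun y hy => (hsub (mk_mem_prod hsT' hy)).2, hW', ⟨x', hxW'⟩,
    fun p hp => interior_subset (hRV (mem_image_of_mem f (hTW hp)))⟩

-- A cluster point `y` of `Y` has `f (t n, y) ∈ A` for all `n`, so a cluster point `s` of the sets
-- `U n`, cut down to those `s'` with `f (s', y)` near `A`, has `f (s, y)` away from `B`. But `f`
-- maps `{s} × Y m` into `B` for all `m`, hence also `(s, y)`.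
theorem SeparatelyContinuous.exists_lt_not_mapsTo (hf : SeparatelyContinuous f)
    (hS : IsFeeblyCompact S) (hX : IsFeeblyCompact X) (hA : IsClosed A) (hB : IsClosed B)
    (hAB : SeparatedNhds A B) {U : ℕ → Set S} (hU : ∀ n, IsOpen (U n)) {t : ℕ → S}
    (ht : ∀ n, t n ∈ U n) {Y : ℕ → Set X} (hY : ∀ n, IsOpen (Y n)) (hYne : ∀ n, (Y n).Nonempty)
    (htY : ∀ m n, n ≤ m → MapsTo (fun y => f (t n, y)) (Y m) A) :
    ∃ m n, m < n ∧ ¬ MapsTo f (U n ×ˢ Y m) B := by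
  by_contra! hUY
  obtain ⟨V, W, hV, hW, hAV, hBW, hVW⟩ := hAB
  obtain ⟨y, hy⟩ := hX.exists_forall_isClosed_mem hY hYne
  have hty (n : ℕ) : f (t n, y) ∈ A :=
    hy _ (hA.preimage (hf.1 (t n))) <| (eventually_ge_atTop n).mono fun m hm => htY m n hm
  obtain ⟨s, hs⟩ := hS.exists_forall_isClosed_mem
    (fun n => (hU n).inter (hV.preimage (hf.2 y))) fun n => ⟨t n, ht n, hAV (hty n)⟩
  have hsW : f (s, y) ∈ Wᶜ :=
    hs _ (hW.isClosed_compl.preimage (hf.2 y)) <|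
      .of_forall fun n s' hs' => hVW.subset_compl_right hs'.2
  have hsY (m : ℕ) : MapsTo (fun y => f (s, y)) (Y m) B := fun z hz =>
    hs _ (hB.preimage (hf.2 z)) <| (eventually_gt_atTop m).mono fun n hmn s' hs' =>
      hUY m n hmn (mk_mem_prod hs'.1 hz)
  exact hsW (hBW (hy _ (hB.preimage (hf.1 s)) (.of_forall hsY)))

/-- One move of a game on pairs of sets `p = (U, Q)`, in which `q` is the position after `p`: both
components shrink, some point of the open set `U` sends the new `Q` into `A`, and on some nonempty
open part of the new `Q` all points of the new `U` take values in `B`. The positions come in the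
order `q p` so that well-foundedness means that there is no infinite play. -/
def SeparatingMove (f : S × X → Z) (A B : Set Z) (q p : Set S × Set X) : Prop :=
  q ≤ p ∧ IsOpen p.1 ∧ (∃ t ∈ p.1, MapsTo (fun y => f (t, y)) q.2 A) ∧
    ∃ Y ⊆ q.2, IsOpen Y ∧ Y.Nonempty ∧ MapsTo f (q.1 ×ˢ Y) B

theorem SeparatelyContinuous.wellFounded_separatingMove (hf : SeparatelyContinuous f)
    (hS : IsFeeblyCompact S) (hX : IsFeeblyCompact X) (hA : IsClosed A) (hB : IsClosed B)
    (hAB : SeparatedNhds A B) : WellFounded (SeparatingMove f A B) := by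
  rw [wellFounded_iff_isEmpty_descending_chain]
  refine ⟨fun ⟨p, hp⟩ => ?_⟩
  choose hle hU hA hB using hp
  choose t ht htA using hA
  choose Y hYQ hY hYne hYB using hB
  have hanti : Antitone p := antitone_nat_of_succ_le hle
  obtain ⟨m, n, hmn, hnB⟩ := hf.exists_lt_not_mapsTo hS hX hA hB hAB hU ht hY hYne
    fun m n hnm => (htA n).mono_left ((hYQ m).trans (hanti (Nat.succ_le_succ hnm)).2)
  exact hnB ((hYB m).mono_left (prod_mono_left (hanti hmn).1))

theorem QuasiContinuous.exists_mem_nhds_snd_mapsTo [RegularSpace Z] (hq : QuasiContinuous f)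
    (hf : SeparatelyContinuous f) (hS : IsFeeblyCompact S) (hX : IsFeeblyCompact X) {s : S} {x : X}
    {O : Set Z} (hO : O ∈ 𝓝 (f (s, x))) {U : Set S} (hU : U ∈ 𝓝 s) :
    ∃ T ⊆ U, IsOpen T ∧ T.Nonempty ∧ ∃ W ∈ 𝓝 x, MapsTo f (T ×ˢ W) O := by
  by_contra! hnot
  obtain ⟨A, hA, hAc, B, hB, hBc, hAB⟩ := exists_isClosed_mem_nhds_separatedNhds hO
  let U₀ : Set S := interior (U ∩ {t | f (t, x) ∈ interior A})
  have hU₀ : s ∈ U₀ := mem_interior_iff_mem_nhds.mpr <|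
    inter_mem hU ((hf.2 x).continuousAt (interior_mem_nhds.mpr hA))
  obtain ⟨⟨T, W⟩, ⟨hT, ⟨t, ht⟩, hTU, hW, hxW⟩, hmin⟩ :=
    (hf.wellFounded_separatingMove hS hX hAc hBc hAB).has_min
      {p | IsOpen p.1 ∧ p.1.Nonempty ∧ p.1 ⊆ U₀ ∧ IsOpen p.2 ∧ x ∈ p.2}
      ⟨(U₀, univ), isOpen_interior, ⟨s, hU₀⟩, subset_rfl, isOpen_univ, mem_univ x⟩
  have hTU' : T ⊆ U ∩ {t | f (t, x) ∈ interior A} := hTU.trans interior_subset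
  let W' : Set X := W ∩ {y | f (t, y) ∈ interior A}
  have hW' : IsOpen W' := hW.inter (isOpen_interior.preimage (hf.1 t))
  have hxW' : x ∈ W' := ⟨hxW, (hTU' ht).2⟩
  have hnotO := hnot T (hTU'.trans inter_subset_left) hT ⟨t, ht⟩ W' (hW'.mem_nhds hxW')
  simp only [MapsTo, not_forall] at hnotO
  obtain ⟨⟨s', x'⟩, ⟨hs', hx'⟩, hO'⟩ := hnotO
  obtain ⟨T', hT'T, hT', hT'ne, Y, hYW', hY, hYne, hYB⟩ := hq.exists_mapsTo_prod
    (mem_nhdsSet_iff_forall.mp hB _ hO') (hT.mem_nhds hs') (hW'.mem_nhds hx')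
  exact hmin (T', W') ⟨hT', hT'ne, hT'T.trans hTU, hW', hxW'⟩
    ⟨⟨hT'T, inter_subset_left⟩, hT, ⟨t, ht, fun y hy => interior_subset hy.2⟩,
      Y, hYW', hY, hYne, hYB⟩

theorem QuasiContinuous.exists_mem_nhds_fst_mapsTo [RegularSpace Z] (hq : QuasiContinuous f)
    (hf : SeparatelyContinuous f) (hS : IsFeeblyCompact S) (hX : IsFeeblyCompact X) {s : S} {x : X}
    {O : Set Z} (hO : O ∈ 𝓝 (f (s, x))) {V : Set X} (hV : V ∈ 𝓝 x) :
    ∃ Y ⊆ V, IsOpen Y ∧ Y.Nonempty ∧ ∃ U ∈ 𝓝 s, MapsTo f (U ×ˢ Y) O := by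
  obtain ⟨Y, hYV, hY, hYne, U, hU, hUY⟩ :=
    (hq.comp_homeomorph (Homeomorph.prodComm X S)).exists_mem_nhds_snd_mapsTo
      ⟨hf.2, hf.1⟩ hX hS hO hV
  exact ⟨Y, hYV, hY, hYne, U, hU, fun p hp => hUY (mk_mem_prod hp.2 hp.1)⟩

end

section

variable {S X : Type*} [Monoid S] [TopologicalSpace S] [TopologicalSpace X] {π : S × X → X}

theorem continuousAt_action_one [RegularSpace X]
    (hS_right : ∀ s : S, Continuous fun t : S => s * t)
    (hS : IsFeeblyCompact S) (hX : IsFeeblyCompact X)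
    (haction : ∀ (s t : S) (x : X), π (s * t, x) = π (s, π (t, x)))
    (hsep : SeparatelyContinuous π) (hqc : QuasiContinuous π) (x : X) :
    ContinuousAt π (1, x) := by
  intro O hO
  by_contra hdisc
  have hfreq : ∃ᶠ z in 𝓝 (1, x), π z ∉ O := not_eventually.mp hdisc
  obtain ⟨A, hA, hAc, B, hB, hBc, hAB⟩ := exists_isClosed_mem_nhds_separatedNhds hO
  obtain ⟨⟨U, Q⟩, ⟨hU, h1U, hQ, hπQ⟩, hmin⟩ :=
    (hsep.wellFounded_separatingMove hS hX hAc hBc hAB).has_min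
      {p | IsOpen p.1 ∧ 1 ∈ p.1 ∧ IsOpen p.2 ∧ ∀ᶠ z in 𝓝 (1, x), π z ∈ p.2}
      ⟨(univ, univ), isOpen_univ, mem_univ 1, isOpen_univ, .of_forall fun _ => mem_univ _⟩
  obtain ⟨T, hTU, hT, ⟨t, ht⟩, W, hW, hTW⟩ := hqc.exists_mem_nhds_snd_mapsTo hsep hS hX
    (interior_mem_nhds.mpr hA) (hU.mem_nhds h1U)
  let Q' : Set X := Q ∩ {y | π (t, y) ∈ interior A}
  have hQ' : IsOpen Q' := hQ.inter (isOpen_interior.preimage (hsep.1 t))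
  have hT1 : {s | t * s ∈ T} ∈ 𝓝 (1 : S) :=
    (hT.preimage (hS_right t)).mem_nhds (by simpa using ht)
  have hπQ' : ∀ᶠ z in 𝓝 ((1 : S), x), π z ∈ Q' := by
    filter_upwards [hπQ, prod_mem_nhds hT1 hW] with z hzQ hz
    refine ⟨hzQ, ?_⟩
    simpa only [haction] using! hTW (mk_mem_prod hz.1 hz.2)
  obtain ⟨z, hzO, hzQ'⟩ := (hfreq.and_eventually hπQ').exists
  have hBz : B ∈ 𝓝 (π (1, π z)) := by
    rw [← haction, one_mul]
    exact mem_nhdsSet_iff_forall.mp hB _ hzO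
  obtain ⟨Y, hYQ', hY, hYne, N, hN, hNB⟩ :=
    hqc.exists_mem_nhds_fst_mapsTo hsep hS hX hBz (hQ'.mem_nhds hzQ')
  exact hmin (U ∩ interior N, Q')
    ⟨hU.inter isOpen_interior, ⟨h1U, mem_interior_iff_mem_nhds.mpr hN⟩, hQ', hπQ'⟩
    ⟨⟨inter_subset_left, inter_subset_left⟩, hU, ⟨t, hTU ht, fun y hy => interior_subset hy.2⟩,
      Y, hYQ', hY, hYne,
      hNB.mono_left (prod_mono_left (inter_subset_right.trans interior_subset))⟩

theorem continuousAt_action_of_isUnit (hS_right : ∀ s : S, Continuous fun t : S => s * t)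
    (haction : ∀ (s t : S) (x : X), π (s * t, x) = π (s, π (t, x)))
    {u : S} (hu : IsUnit u) (hπu : Continuous fun x : X => π (u, x)) {x : X}
    (h1 : ContinuousAt π (1, x)) : ContinuousAt π (u, x) := by
  obtain ⟨v, huv, hvu⟩ := isUnit_iff_exists.mp hu
  have hfactor : π = (fun y => π (u, y)) ∘ π ∘ fun p => (v * p.1, p.2) := by
    ext p
    simp only [Function.comp_apply, ← haction, ← mul_assoc, huv, one_mul]
  have htranslate : Continuous fun p : S × X => (v * p.1, p.2) :=
    ((hS_right v).comp continuous_fst).prodMk continuous_snd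
  rw [hfactor]
  refine hπu.continuousAt.comp (ContinuousAt.comp ?_ htranslate.continuousAt)
  simpa only [hvu] using h1

end

theorem lawson_unit_continuity_general
    {S X : Type*} [Monoid S] [TopologicalSpace S] [TopologicalSpace X] [RegularSpace X]
    (hS_right : ∀ s : S, Continuous fun t : S => s * t)
    (hS : IsFeeblyCompact S) (hX : IsFeeblyCompact X)
    (π : S × X → X)
    (haction : ∀ (s t : S) (x : X), π (s * t, x) = π (s, π (t, x)))
    (hsep : SeparatelyContinuous π) (hqc : QuasiContinuous π) :
    ∀ u : S, IsUnit u → ∀ x : X, ContinuousAt π (u, x) := fun _ hu x =>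
  continuousAt_action_of_isUnit hS_right haction hu (hsep.1 _)
    (continuousAt_action_one hS_right hS hX haction hsep hqc x)

theorem lawson_unit_continuity
    {S X : Type*} [Monoid S] [TopologicalSpace S] [TopologicalSpace X]
    [T35Space S] [T35Space X]
    (hS_right : ∀ s : S, Continuous fun t : S => s * t)
    (hS : IsPseudocompact S) (hX : IsPseudocompact X)
    (π : S × X → X)
    (haction : ∀ (s t : S) (x : X), π (s * t, x) = π (s, π (t, x)))
    (hsep : SeparatelyContinuous π) (hqc : QuasiContinuous π) :
    ∀ u : S, IsUnit u → ∀ x : X, ContinuousAt π (u, x) :=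
  lawson_unit_continuity_general hS_right hS.isFeeblyCompact hX.isFeeblyCompact π haction hsep hqc
end

section
/- Let (S, •) be a Tychonoff pseudocompact semitopological monoid whose multiplication • : S × S → S is quasicontinuous, and let G be a subgroup of S whose identity is the identity 1 of S (that is, a subsemigroup of S containing 1 in which every element has an inverse with respect to 1). Then G, with the subspace topology, is a topological group. -/
open Filter Topology Set

/-!
For a continuous `φ : S → ℝ` put `f x y = φ (x * y)`. Every nonempty open subset of `S` contains a
nonempty open set on which the functions `f x` are within `ε` of each other uniformly in `y`.
Otherwise quasicontinuity produces points `x i`, open sets `U n` decreasing around them, and open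
sets `V true n`, `V false n` along which each `f (x i)` has one and the same limit, although `f`
takes well separated values on `U n × V true n` and `U n × V false n`; this contradicts the
existence of cluster points, which pseudocompactness provides. By a double limit argument of
Grothendieck type, uniform smallness of these oscillations forces all pointwise limits of the
functions `f x` to be continuous.

The pointwise closure `K` of the functions `f g`, `g ∈ G`, is thus a compact space of continuous
functions. The same construction applies to the evaluation on `K × S`, with compactness of `K`
replacing quasicontinuity, so `g ↦ f g` has uniform oscillation at most `ε` on some nonempty
open subset of `G`. Translations carry this set to any point of `G`: the functions
`y ↦ φ (a * y)` depend continuously on `a ∈ G` for uniform convergence. Joint continuity of the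
multiplication and continuity of the inversion follow.
-/

section Pseudocompact

variable {X : Type*} [TopologicalSpace X]

/-- `x` is a cluster point of the sequence of sets `U`: every neighbourhood of `x` meets `U n` for
infinitely many `n`. For singletons this is `MapClusterPt` along `atTop`. -/
def SetClusterPt (U : ℕ → Set X) (x : X) : Prop :=
  ∀ N ∈ 𝓝 x, ∃ᶠ n in atTop, (U n ∩ N).Nonempty

theorem SetClusterPt.mono {U V : ℕ → Set X} {x : X} (hx : SetClusterPt U x)
    (hUV : ∀ n, U n ⊆ V n) : SetClusterPt V x := fun N hN =>
  (hx N hN).mono fun n hn => hn.mono (inter_subset_inter_left N (hUV n))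

theorem SetClusterPt.mem_of_isClosed {U : ℕ → Set X} {x : X} (hx : SetClusterPt U x) {C : Set X}
    (hC : IsClosed C) (hUC : ∀ᶠ n in atTop, U n ⊆ C) : x ∈ C := by
  by_contra hxC
  obtain ⟨n, ⟨u, huU, huC⟩, hsub⟩ :=
    ((hx Cᶜ (hC.isOpen_compl.mem_nhds hxC)).and_eventually hUC).exists
  exact huC (hsub huU)

theorem setClusterPt_of_mapClusterPt {U : ℕ → Set X} {x : ℕ → X} {a : X}
    (ha : MapClusterPt a atTop x) (hx : ∀ n, x n ∈ U n) : SetClusterPt U a := fun _ hN =>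
  (ha.frequently hN).mono fun n hn => ⟨x n, hx n, hn⟩

theorem exists_continuousMap_eq_one_of_isOpen [CompletelyRegularSpace X] {U : Set X}
    (hU : IsOpen U) {x : X} (hx : x ∈ U) :
    ∃ φ : C(X, ℝ), φ x = 1 ∧ (∀ y, 0 ≤ φ y) ∧ ∀ y ∉ U, φ y = 0 := by
  obtain ⟨g, hg, hgx, hgU⟩ := CompletelyRegularSpace.completely_regular x Uᶜ hU.isClosed_compl
    (not_not.2 hx)
  refine ⟨⟨fun y => 1 - (g y : ℝ), by fun_prop⟩, by simp [hgx], fun y => ?_, fun y hy => ?_⟩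
  · exact sub_nonneg.2 (g y).2.2
  · simp [show g y = 1 from hgU hy]

theorem tendsto_of_forall_continuousMap [CompletelyRegularSpace X] {α : Type*} {l : Filter α}
    {u : α → X} {x : X} (h : ∀ φ : C(X, ℝ), Tendsto (fun a => φ (u a)) l (𝓝 (φ x))) :
    Tendsto u l (𝓝 x) := by
  rw [tendsto_nhds]
  intro V hV hxV
  obtain ⟨φ, hφx, -, hφV⟩ := exists_continuousMap_eq_one_of_isOpen hV hxV
  filter_upwards [(h φ).eventually_ne (by rw [hφx]; exact one_ne_zero)] with a ha
  exact not_not.1 fun haV => ha (hφV _ haV)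

/-- If the sets clustered nowhere, bump functions of height `n` supported in `U n` would add up to
an unbounded continuous function. -/
theorem IsPseudocompact.exists_setClusterPt [CompletelyRegularSpace X] (hX : IsPseudocompact X)
    {U : ℕ → Set X} (hU : ∀ n, IsOpen (U n)) (hne : ∀ n, (U n).Nonempty) :
    ∃ x, SetClusterPt U x := by
  by_contra! hcluster
  choose x hx using hne
  choose φ hφx hφ_nonneg hφU using fun n => exists_continuousMap_eq_one_of_isOpen (hU n) (hx n)
  have hfin : LocallyFinite fun n : ℕ => Function.support fun y => (n : ℝ) * φ n y := by
    intro z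
    obtain ⟨N, hN, hNU⟩ : ∃ N ∈ 𝓝 z, ∀ᶠ n in atTop, U n ∩ N = ∅ := by
      simpa [SetClusterPt, not_nonempty_iff_eq_empty] using hcluster z
    refine ⟨N, hN, (Nat.cofinite_eq_atTop ▸ hNU : ∀ᶠ n in cofinite, U n ∩ N = ∅).subset ?_⟩
    rintro n ⟨y, hy, hyN⟩ hempty
    have hyU : y ∈ U n := not_not.1 fun hyU => hy (by simp [hφU n y hyU])
    exact (hempty.subset ⟨hyU, hyN⟩ : y ∈ (∅ : Set X))
  obtain ⟨M, hM⟩ := hX _ (continuous_finsum (fun n => by fun_prop) hfin)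
  obtain ⟨n, hn⟩ := exists_nat_gt M
  have hle : (n : ℝ) * φ n (x n) ≤ ∑ᶠ m : ℕ, (m : ℝ) * φ m (x n) :=
    single_le_finsum n (hfin.point_finite (x n)) fun m =>
      mul_nonneg m.cast_nonneg (hφ_nonneg m (x n))
  rw [hφx, mul_one] at hle
  exact absurd ((le_abs_self _).trans (hM (x n))) (by linarith)

theorem IsPseudocompact.exists_setClusterPt_forall_eq [CompletelyRegularSpace X]
    (hX : IsPseudocompact X) {V : ℕ → Set X} (hV : ∀ n, IsOpen (V n)) (hne : ∀ n, (V n).Nonempty)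
    {ι : Type*} {g : ι → X → ℝ} (hg : ∀ i, Continuous (g i)) {c : ι → ℝ}
    (hgc : ∀ i, ∀ η > 0, ∀ᶠ n in atTop, ∀ v ∈ V n, |g i v - c i| < η) :
    ∃ x, SetClusterPt V x ∧ ∀ i, g i x = c i := by
  obtain ⟨x, hx⟩ := hX.exists_setClusterPt hV hne
  refine ⟨x, hx, fun i => ?_⟩
  have hle : |g i x - c i| ≤ 0 := le_of_forall_pos_le_add fun η hη => by
    have hcont := hg i
    rw [zero_add]
    exact hx.mem_of_isClosed (C := {v | |g i v - c i| ≤ η})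
      (isClosed_le (by fun_prop) continuous_const)
      ((hgc i η hη).mono fun n hn v hv => (hn v hv).le)
  exact sub_eq_zero.1 (abs_nonpos_iff.1 hle)

theorem IsPseudocompact.exists_forall_mapClusterPt [CompletelyRegularSpace X]
    (hX : IsPseudocompact X) {ι : Type*} [Countable ι] {g : ι → X → ℝ} (hg : ∀ i, Continuous (g i))
    (v : ℕ → X) : ∃ x, ∀ i, MapClusterPt (g i x) atTop fun n => g i (v n) := by
  obtain ⟨e, he⟩ := Countable.exists_injective_nat ι
  have hfin (n : ℕ) : {i | e i ≤ n}.Finite := (finite_Iic n).preimage he.injOn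
  let V (n : ℕ) : Set X := ⋂ i ∈ {i | e i ≤ n}, {t | |g i t - g i (v n)| < 1 / (n + 1)}
  obtain ⟨x, hx⟩ := hX.exists_setClusterPt (U := V)
    (fun n => (hfin n).isOpen_biInter fun i _ =>
      isOpen_lt ((hg i).sub continuous_const).abs continuous_const)
    (fun n => ⟨v n, by simp [V, Nat.cast_add_one_pos]⟩)
  refine ⟨x, fun i => mapClusterPt_iff_frequently.2 fun N hN => ?_⟩
  obtain ⟨η, hη, hηN⟩ := Metric.mem_nhds_iff.1 hN
  have hsmall := tendsto_one_div_add_atTop_nhds_zero_nat.eventually_lt_const (half_pos hη)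
  refine ((hx _ ((hg i).continuousAt (Metric.ball_mem_nhds _ (half_pos hη)))).and_eventually
    (hsmall.and (eventually_ge_atTop (e i)))).mono ?_
  rintro n ⟨⟨t, htV, ht⟩, hn, hin⟩
  have htv : |g i t - g i (v n)| < 1 / (n + 1) := mem_iInter₂.1 htV i hin
  have htx : |g i t - g i x| < η / 2 := ht
  refine hηN (Metric.mem_ball.2 ?_)
  rw [Real.dist_eq]
  grind

end Pseudocompact

section QuasiContinuous

variable {X Y Z : Type*} [TopologicalSpace X] [TopologicalSpace Y] [TopologicalSpace Z]

theorem quasiContinuous_of_continuous {f : X → Y} (hf : Continuous f) : QuasiContinuous f :=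
  fun x V hV hxV U hU hxU => ⟨U ∩ f ⁻¹' V, hU.inter (hV.preimage hf), ⟨x, hxU, hxV⟩,
    inter_subset_left, image_subset_iff.2 inter_subset_right⟩

theorem QuasiContinuous.continuous_comp {f : X → Y} (hf : QuasiContinuous f) {g : Y → Z}
    (hg : Continuous g) : QuasiContinuous (g ∘ f) := fun x V hV hxV U hU hxU => by
  obtain ⟨W, hW, hWne, hWU, hWV⟩ := hf x (g ⁻¹' V) (hV.preimage hg) hxV U hU hxU
  exact ⟨W, hW, hWne, hWU, by rwa [image_comp, image_subset_iff]⟩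

theorem QuasiContinuous.exists_box {f : X → Y → Z} (hf : QuasiContinuous (Function.uncurry f))
    {O : Set Z} (hO : IsOpen O) {x : X} {y : Y} (hxy : f x y ∈ O) {U : Set X} (hU : IsOpen U)
    (hx : x ∈ U) {V : Set Y} (hV : IsOpen V) (hy : y ∈ V) :
    ∃ U' ⊆ U, ∃ V' ⊆ V, IsOpen U' ∧ IsOpen V' ∧ U'.Nonempty ∧ V'.Nonempty ∧
      ∀ u ∈ U', ∀ v ∈ V', f u v ∈ O := by
  obtain ⟨W, hWo, ⟨⟨a, b⟩, hab⟩, hWUV, hWO⟩ :=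
    hf (x, y) O hO hxy (U ×ˢ V) (hU.prod hV) ⟨hx, hy⟩
  obtain ⟨A, B, hA, hB, ha, hb, hABW⟩ := isOpen_prod_iff.1 hWo a b hab
  obtain ⟨hAU, hBV⟩ := (prod_subset_prod_iff' ⟨(a, b), ha, hb⟩).1 (hABW.trans hWUV)
  exact ⟨A, hAU, B, hBV, hA, hB, ⟨a, ha⟩, ⟨b, hb⟩, fun u hu v hv =>
    hWO ⟨(u, v), hABW ⟨hu, hv⟩, rfl⟩⟩

end QuasiContinuous

section Oscillation

variable {X Y : Type*} {f : X → Y → ℝ} {ε η δ M : ℝ}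

/-- The functions `f u`, for `u ∈ U`, lie within uniform distance `ε` of each other. -/
def OscLE (f : X → Y → ℝ) (ε : ℝ) (U : Set X) : Prop :=
  ∀ u ∈ U, ∀ u' ∈ U, ∀ y, |f u y - f u' y| ≤ ε

theorem exists_finset_forall_exists_abs_sub_lt (hM : ∀ x y, |f x y| ≤ M) (F : Finset X)
    (hη : 0 < η) : ∃ T : Finset Y, ∀ y, ∃ t ∈ T, ∀ x ∈ F, |f x y - f x t| < η := by
  let restr (y : Y) (x : F) : ℝ := f x y
  have hcube : restr '' univ ⊆ univ.pi fun _ => Icc (-M) M := by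
    rintro _ ⟨y, -, rfl⟩
    exact mem_univ_pi.2 fun x => abs_le.1 (hM x y)
  have hbdd : TotallyBounded (restr '' univ) :=
    (isCompact_univ_pi fun _ => isCompact_Icc).totallyBounded.subset hcube
  obtain ⟨T, -, hTfin, hT⟩ := exists_subset_image_finite_and.1
    (Metric.finite_approx_of_totallyBounded hbdd η hη)
  refine ⟨hTfin.toFinset, fun y => ?_⟩
  obtain ⟨_, ⟨t, ht, rfl⟩, hyt⟩ := mem_iUnion₂.1 (hT (mem_image_of_mem restr (mem_univ y)))
  exact ⟨t, hTfin.mem_toFinset.2 ht, fun x hx => (dist_pi_lt_iff hη).1 hyt ⟨x, hx⟩⟩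

variable [TopologicalSpace X]

theorem exists_oscLE_of_finset (hf : ∀ y, Continuous fun x => f x y) (hM : ∀ x y, |f x y| ≤ M)
    (hε : 0 < ε) (hη : 0 < η) {U : Set X} (hU : IsOpen U) (hne : U.Nonempty) (F : Finset X)
    (hF : ∀ u ∈ U, ∀ v v', (∀ x ∈ F, |f x v - f x v'| < η) → |f u v - f u v'| ≤ ε) :
    ∃ U' ⊆ U, IsOpen U' ∧ U'.Nonempty ∧ OscLE f (3 * ε) U' := by
  obtain ⟨T, hT⟩ := exists_finset_forall_exists_abs_sub_lt hM F hη
  obtain ⟨u₀, hu₀⟩ := hne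
  refine ⟨U ∩ ⋂ t ∈ T, {u | |f u t - f u₀ t| < ε / 2}, inter_subset_left,
    hU.inter (isOpen_biInter_finset fun t _ => ?_), ⟨u₀, hu₀, by simp [hε]⟩, ?_⟩
  · have := hf t
    exact isOpen_lt (by fun_prop) continuous_const
  · rintro u ⟨hu, huT⟩ u' ⟨hu', hu'T⟩ y
    obtain ⟨t, ht, hyt⟩ := hT y
    have hy := abs_le.1 (hF u hu y t hyt)
    have hy' := abs_le.1 (hF u' hu' y t hyt)
    have hut : |f u t - f u₀ t| < ε / 2 := mem_iInter₂.1 huT t ht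
    have hut' : |f u' t - f u₀ t| < ε / 2 := mem_iInter₂.1 hu'T t ht
    rw [abs_lt] at hut hut'
    exact abs_le.2 ⟨by linarith, by linarith⟩

section SeparatedBoxes

variable [TopologicalSpace Y]

/-- A stage of the construction in `exists_seq_separatedBoxes`: on the boxes `A × V true` and
`A × V false` the function `f` is within `δ` of two values more than `ε` apart, although no `x ∈ F`
distinguishes `V true` from `V false` up to `η`. -/
structure SeparatedBoxes (f : X → Y → ℝ) (ε η δ : ℝ) (F : Finset X) (A : Set X) (u : X)
    (w : Bool → Y) (V : Bool → Set Y) : Prop where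
  isOpen_right : ∀ b, IsOpen (V b)
  nonempty_right : ∀ b, (V b).Nonempty
  near : ∀ b, ∀ v ∈ V b, ∀ x ∈ F, |f x v - f x (w true)| < η
  close : ∀ b, ∀ a ∈ A, ∀ v ∈ V b, |f a v - f u (w b)| < δ
  gap : ε < |f u (w true) - f u (w false)|

theorem exists_separatedBoxes (hf : SeparatelyContinuous (Function.uncurry f))
    (hqc : QuasiContinuous (Function.uncurry f)) (hM : ∀ x y, |f x y| ≤ M) (hε : 0 < ε)
    (hη : 0 < η) (hδ : 0 < δ) {U : Set X} (hU : IsOpen U) (hne : U.Nonempty)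
    (hosc : ∀ U' ⊆ U, IsOpen U' → U'.Nonempty → ¬ OscLE f (3 * ε) U') (F : Finset X) :
    ∃ A ⊆ U, IsOpen A ∧ A.Nonempty ∧ ∃ u w V, SeparatedBoxes f ε η δ F A u w V := by
  obtain ⟨hfY, hfX⟩ := hf
  obtain ⟨u, hu, w, w', hww', hgap⟩ : ∃ u ∈ U, ∃ v v',
      (∀ x ∈ F, |f x v - f x v'| < η) ∧ ε < |f u v - f u v'| := by
    by_contra! hF
    obtain ⟨U', hU'U, hU'o, hU'ne, hU'osc⟩ := exists_oscLE_of_finset hfX hM hε hη hU hne F hF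
    exact hosc U' hU'U hU'o hU'ne hU'osc
  have hnear (x : X) (y : Y) : f x y ∈ Metric.ball (f x y) δ := Metric.mem_ball_self hδ
  let N : Set Y := ⋂ x ∈ F, {v | |f x v - f x w| < η}
  have hN : IsOpen N := isOpen_biInter_finset fun x _ => by
    have := hfY x
    exact isOpen_lt (by fun_prop) continuous_const
  have hNF (v : Y) (hv : v ∈ N) (x : X) (hx : x ∈ F) : |f x v - f x w| < η :=
    mem_iInter₂.1 hv x hx
  have hwN : w ∈ N := by simp [N, hη]
  have hw'N : w' ∈ N := mem_iInter₂.2 fun x hx => by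
    simpa [abs_sub_comm] using hww' x hx
  have hUw' : IsOpen (U ∩ {a | f a w' ∈ Metric.ball (f u w') δ}) :=
    hU.inter (Metric.isOpen_ball.preimage (hfX w'))
  obtain ⟨U₁, hU₁U, V₁, hV₁N, hU₁, hV₁, ⟨u₁, hu₁⟩, hV₁ne, hUV₁⟩ :=
    hqc.exists_box Metric.isOpen_ball (hnear u w) hUw' ⟨hu, hnear u w'⟩ hN hwN
  obtain ⟨U₂, hU₂U₁, V₂, hV₂N, hU₂, hV₂, hU₂ne, hV₂ne, hUV₂⟩ :=
    hqc.exists_box Metric.isOpen_ball (hU₁U hu₁).2 hU₁ hu₁ hN hw'N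
  refine ⟨U₂, fun a ha => (hU₁U (hU₂U₁ ha)).1, hU₂, hU₂ne, u, fun b => bif b then w else w',
    fun b => bif b then V₁ else V₂, ?_, ?_, ?_, ?_, hgap⟩
  · exact Bool.forall_bool.2 ⟨hV₂, hV₁⟩
  · exact Bool.forall_bool.2 ⟨hV₂ne, hV₁ne⟩
  · exact Bool.forall_bool.2 ⟨fun v hv => hNF v (hV₂N hv), fun v hv => hNF v (hV₁N hv)⟩
  · exact Bool.forall_bool.2 ⟨hUV₂, fun a ha => hUV₁ a (hU₂U₁ ha)⟩

theorem exists_seq_separatedBoxes (hf : SeparatelyContinuous (Function.uncurry f))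
    (hqc : QuasiContinuous (Function.uncurry f)) (hM : ∀ x y, |f x y| ≤ M) (hε : 0 < ε)
    (hδ : 0 < δ) {U₀ : Set X} (hU₀ : IsOpen U₀) (hne : U₀.Nonempty)
    (hosc : ∀ U ⊆ U₀, IsOpen U → U.Nonempty → ¬ OscLE f (3 * ε) U) :
    ∃ (U : ℕ → Set X) (x : ℕ → X) (F : ℕ → Finset X) (u : ℕ → X) (w : ℕ → Bool → Y)
      (V : ℕ → Bool → Set Y), (∀ n, IsOpen (U n)) ∧ Antitone U ∧ (∀ n, x n ∈ U n) ∧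
      (∀ i n, i ≤ n → x i ∈ F n) ∧
      ∀ n : ℕ, SeparatedBoxes f ε (1 / (n + 1)) δ (F n) (U (n + 1)) (u n) (w n) (V n) := by
  classical
  let Stage := {p : Set X × Finset X // p.1 ⊆ U₀ ∧ IsOpen p.1 ∧ ∃ x ∈ p.2, x ∈ p.1}
  have hstep (n : ℕ) (p : Stage) : ∃ q : Stage, q.1.1 ⊆ p.1.1 ∧ p.1.2 ⊆ q.1.2 ∧ ∃ u w V,
      SeparatedBoxes f ε (1 / (n + 1)) δ p.1.2 q.1.1 u w V := by
    obtain ⟨⟨U, F⟩, hUU₀, hU, x, -, hx⟩ := p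
    obtain ⟨A, hAU, hA, ⟨a, ha⟩, hbox⟩ := exists_separatedBoxes hf hqc hM hε
      Nat.one_div_pos_of_nat hδ hU ⟨x, hx⟩ (fun U' hU' => hosc U' (hU'.trans hUU₀)) F
    exact ⟨⟨(A, insert a F), hAU.trans hUU₀, hA, a, Finset.mem_insert_self a F, ha⟩, hAU,
      Finset.subset_insert a F, hbox⟩
  choose next hnextU hnextF u w V hbox using hstep
  obtain ⟨x₀, hx₀⟩ := hne
  let stage (n : ℕ) : Stage :=
    n.rec ⟨(U₀, {x₀}), Subset.rfl, hU₀, x₀, Finset.mem_singleton_self x₀, hx₀⟩ next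
  choose x hxF hxU using fun n => (stage n).2.2.2
  have hF : Monotone fun n => (stage n).1.2 := monotone_nat_of_le_succ fun n => hnextF n (stage n)
  exact ⟨fun n => (stage n).1.1, x, fun n => (stage n).1.2, fun n => u n (stage n),
    fun n => w n (stage n), fun n => V n (stage n), fun n => (stage n).2.2.1,
    antitone_nat_of_succ_le fun n => hnextU n (stage n), hxU, fun i n hin => hF hin (hxF i),
    fun n => hbox n (stage n)⟩

end SeparatedBoxes

/-- Along both sequences `V true` and `V false`, each function `f (x i)` converges to the same
number `c i`, whereas on `U n × V b n` the function `f` is eventually within `δ` of `s b`, with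
`s true` and `s false` at distance at least `ε`. It obstructs small oscillation. -/
structure SeparatingSequence (f : X → Y → ℝ) (ε δ : ℝ) where
  U : ℕ → Set X
  x : ℕ → X
  V : Bool → ℕ → Set Y
  c : ℕ → ℝ
  s : Bool → ℝ
  isOpen_left : ∀ n, IsOpen (U n)
  antitone_left : Antitone U
  mem_left : ∀ n, x n ∈ U n
  nonempty_right : ∀ b n, (V b n).Nonempty
  near : ∀ b i, ∀ η > 0, ∀ᶠ n in atTop, ∀ v ∈ V b n, |f (x i) v - c i| < η
  close : ∀ b, ∀ᶠ n in atTop, ∀ u ∈ U n, ∀ v ∈ V b n, |f u v - s b| ≤ δ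
  gap : ε ≤ |s true - s false|

theorem exists_separatingSequence [TopologicalSpace Y]
    (hf : SeparatelyContinuous (Function.uncurry f))
    (hqc : QuasiContinuous (Function.uncurry f)) (hM : ∀ x y, |f x y| ≤ M) (hε : 0 < ε)
    (hδ : 0 < δ) {U₀ : Set X} (hU₀ : IsOpen U₀) (hne : U₀.Nonempty)
    (hosc : ∀ U ⊆ U₀, IsOpen U → U.Nonempty → ¬ OscLE f (3 * ε) U) :
    ∃ S : SeparatingSequence f ε δ, ∀ b n, IsOpen (S.V b n) := by
  obtain ⟨U, x, F, u, w, V, hU, hUanti, hxU, hxF, hbox⟩ :=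
    exists_seq_separatedBoxes hf hqc hM hε (half_pos hδ) hU₀ hne hosc
  obtain ⟨⟨c, s⟩, -, φ, hφ, hlim⟩ := ((isCompact_univ_pi fun _ : ℕ => isCompact_Icc).prod
    (isCompact_univ_pi fun _ : Bool => isCompact_Icc)).tendsto_subseq
      (x := fun n => (fun i => f (x i) (w n true), fun b => f (u n) (w n b))) fun n =>
        ⟨mem_univ_pi.2 fun i => abs_le.1 (hM _ _), mem_univ_pi.2 fun b => abs_le.1 (hM _ _)⟩
  rw [Prod.tendsto_iff, tendsto_pi_nhds, tendsto_pi_nhds] at hlim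
  obtain ⟨hc, hs⟩ := hlim
  refine ⟨⟨fun n => U (φ n + 1), fun n => x (φ n + 1), fun b n => V (φ n) b, fun i => c (φ i + 1),
    s, fun n => hU _, fun m n hmn => hUanti (Nat.succ_le_succ (hφ.monotone hmn)), fun n => hxU _,
    fun b n => (hbox _).nonempty_right b, fun b i η hη => ?_, fun b => ?_, ?_⟩,
    fun b n => (hbox _).isOpen_right b⟩
  · have hη' := (tendsto_one_div_add_atTop_nhds_zero_nat.comp hφ.tendsto_atTop).eventually_lt_const
      (half_pos hη)
    have hci := (hc (φ i + 1)).eventually (Metric.ball_mem_nhds _ (half_pos hη))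
    filter_upwards [hη', hci, eventually_gt_atTop i] with n hnη hnc hin v hv
    have hnear := (hbox (φ n)).near b v hv _ (hxF (φ i + 1) (φ n) (hφ hin))
    calc |f (x (φ i + 1)) v - c (φ i + 1)|
        ≤ |f (x (φ i + 1)) v - f (x (φ i + 1)) (w (φ n) true)|
          + |f (x (φ i + 1)) (w (φ n) true) - c (φ i + 1)| := abs_sub_le _ _ _
      _ < η / 2 + η / 2 := add_lt_add (hnear.trans hnη) hnc
      _ = η := add_halves η
  · filter_upwards [(hs b).eventually (Metric.ball_mem_nhds _ (half_pos hδ))] with n hn a ha v hv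
    calc |f a v - s b| ≤ |f a v - f (u (φ n)) (w (φ n) b)| + |f (u (φ n)) (w (φ n) b) - s b| :=
          abs_sub_le _ _ _
      _ ≤ δ / 2 + δ / 2 := add_le_add ((hbox (φ n)).close b a ha v hv).le (le_of_lt hn)
      _ = δ := add_halves δ
  · exact ge_of_tendsto' ((hs true).sub (hs false)).abs fun n => (hbox (φ n)).gap.le

theorem nonempty_separatingSequence_of_forall_continuous (hf : ∀ y, Continuous fun x => f x y)
    (hM : ∀ x y, |f x y| ≤ M) (hε : 0 < ε) (hδ : 0 < δ) {U₀ : Set X} (hU₀ : IsOpen U₀)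
    (hne : U₀.Nonempty) (hosc : ∀ U ⊆ U₀, IsOpen U → U.Nonempty → ¬ OscLE f (3 * ε) U) :
    Nonempty (SeparatingSequence f ε δ) := by
  -- A separating sequence involves no topology on `Y`, and the discrete one makes `f` continuous.
  let _ : TopologicalSpace Y := ⊥
  have : DiscreteTopology Y := ⟨rfl⟩
  have hcont : Continuous (Function.uncurry f) := continuous_prod_of_discrete_right.2 hf
  obtain ⟨S, -⟩ := exists_separatingSequence ⟨fun _ => continuous_of_discreteTopology, hf⟩
    (quasiContinuous_of_continuous hcont) hM hε hδ hU₀ hne hosc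
  exact ⟨S⟩

theorem SeparatingSequence.close_of_setClusterPt (S : SeparatingSequence f ε δ)
    (hf : ∀ y, Continuous fun x => f x y) {a : X} (ha : SetClusterPt S.U a) (b : Bool) :
    ∀ᶠ n in atTop, ∀ v ∈ S.V b n, |f a v - S.s b| ≤ δ := by
  filter_upwards [S.close b] with n hn v hv
  have := hf v
  refine ha.mem_of_isClosed (C := {u | |f u v - S.s b| ≤ δ})
    (isClosed_le (by fun_prop) continuous_const) ?_
  filter_upwards [eventually_ge_atTop n] with m hnm u hu
  exact hn u (S.antitone_left hnm hu) v hv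

theorem SeparatingSequence.le_three_mul_of_isPseudocompact [CompletelyRegularSpace X]
    [TopologicalSpace Y] [CompletelyRegularSpace Y] (S : SeparatingSequence f ε δ)
    (hV : ∀ b n, IsOpen (S.V b n)) (hX : IsPseudocompact X) (hY : IsPseudocompact Y)
    (hf : SeparatelyContinuous (Function.uncurry f)) (hδ : 0 < δ) : ε ≤ 3 * δ := by
  obtain ⟨hfY, hfX⟩ := hf
  choose y hyV hyc using fun b => hY.exists_setClusterPt_forall_eq (hV b) (S.nonempty_right b)
    (g := fun i => f (S.x i)) (fun i => hfY (S.x i)) (S.near b)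
  have hdiff : Continuous fun u => |f u (y true) - f u (y false)| :=
    ((hfX (y true)).sub (hfX (y false))).abs
  obtain ⟨a, ha⟩ := hX.exists_setClusterPt
    (U := fun n => S.U n ∩ {u | |f u (y true) - f u (y false)| < δ})
    (fun n => (S.isOpen_left n).inter (isOpen_lt hdiff continuous_const))
    (fun n => ⟨S.x n, S.mem_left n, by simpa [hyc] using hδ⟩)
  have hay : a ∈ {u | |f u (y true) - f u (y false)| ≤ δ} :=
    ha.mem_of_isClosed (isClosed_le hdiff continuous_const)
      (.of_forall fun n u ⟨_, (hu : |f u (y true) - f u (y false)| < δ)⟩ => hu.le)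
  have has (b : Bool) : |f a (y b) - S.s b| ≤ δ :=
    (hyV b).mem_of_isClosed (C := {v | |f a v - S.s b| ≤ δ})
      (isClosed_le ((hfY a).sub continuous_const).abs continuous_const)
      (S.close_of_setClusterPt hfX (ha.mono fun n => inter_subset_left) b)
  have hgap := S.gap
  have htrue := has true
  have hfalse := has false
  grind

theorem SeparatingSequence.le_two_mul_of_compactSpace [CompactSpace X]
    [TopologicalSpace Y] [CompletelyRegularSpace Y] (S : SeparatingSequence f ε δ)
    (hY : IsPseudocompact Y) (hf : SeparatelyContinuous (Function.uncurry f)) : ε ≤ 2 * δ := by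
  obtain ⟨hfY, hfX⟩ := hf
  obtain ⟨a, ha : MapClusterPt a atTop S.x⟩ := exists_clusterPt_of_compactSpace (map S.x atTop)
  choose v hv using S.nonempty_right
  choose y hy using fun b => hY.exists_forall_mapClusterPt
    (g := fun i : Option ℕ => f (i.elim a S.x)) (fun i => hfY _) (v b)
  have hxy (b : Bool) (i : ℕ) : f (S.x i) (y b) = S.c i := by
    have hlim : Tendsto (fun n => f (S.x i) (v b n)) atTop (𝓝 (S.c i)) :=
      Metric.tendsto_nhds.2 fun η hη => (S.near b i η hη).mono fun n hn => hn _ (hv b n)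
    exact eq_of_nhds_neBot (ClusterPt.mono (hy b (some i)) hlim)
  have hay : f a (y true) = f a (y false) :=
    (isClosed_eq (hfX (y true)) (hfX (y false))).mem_of_mapClusterPt ha
      (.of_forall fun i => (hxy true i).trans (hxy false i).symm)
  have has (b : Bool) : |f a (y b) - S.s b| ≤ δ :=
    Metric.isClosed_closedBall.mem_of_mapClusterPt (hy b none)
      ((S.close_of_setClusterPt hfX (setClusterPt_of_mapClusterPt ha S.mem_left) b).mono
        fun n hn => hn _ (hv b n))
  have hgap := S.gap
  have htrue := has true
  have hfalse := has false
  grind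

theorem exists_oscLE_of_quasiContinuous [CompletelyRegularSpace X] [TopologicalSpace Y]
    [CompletelyRegularSpace Y] (hX : IsPseudocompact X) (hY : IsPseudocompact Y)
    (hf : SeparatelyContinuous (Function.uncurry f)) (hqc : QuasiContinuous (Function.uncurry f))
    (hM : ∀ x y, |f x y| ≤ M) (hε : 0 < ε) {U₀ : Set X} (hU₀ : IsOpen U₀) (hne : U₀.Nonempty) :
    ∃ U ⊆ U₀, IsOpen U ∧ U.Nonempty ∧ OscLE f ε U := by
  by_contra! hosc
  obtain ⟨S, hS⟩ := exists_separatingSequence hf hqc hM (ε := ε / 3) (δ := ε / 12) (by positivity)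
    (by positivity) hU₀ hne (by rwa [mul_div_cancel₀ ε three_ne_zero])
  linarith [S.le_three_mul_of_isPseudocompact hS hX hY hf (by positivity)]

theorem exists_oscLE_of_compactSpace [CompactSpace X] [TopologicalSpace Y]
    [CompletelyRegularSpace Y] (hY : IsPseudocompact Y)
    (hf : SeparatelyContinuous (Function.uncurry f)) (hM : ∀ x y, |f x y| ≤ M) (hε : 0 < ε)
    {U₀ : Set X} (hU₀ : IsOpen U₀) (hne : U₀.Nonempty) :
    ∃ U ⊆ U₀, IsOpen U ∧ U.Nonempty ∧ OscLE f ε U := by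
  by_contra! hosc
  obtain ⟨S⟩ := nonempty_separatingSequence_of_forall_continuous hf.2 hM (ε := ε / 3)
    (δ := ε / 12) (by positivity) (by positivity) hU₀ hne
    (by rwa [mul_div_cancel₀ ε three_ne_zero])
  linarith [S.le_two_mul_of_compactSpace hY hf]

end Oscillation

section ClosureRange

variable {X Y : Type*} {f : X → Y → ℝ} {p : Y → ℝ} {ε δ M : ℝ}

theorem exists_forall_abs_sub_lt_of_mem_closure_range (hp : p ∈ closure (range f)) (F : Finset Y)
    (hδ : 0 < δ) : ∃ x, ∀ y ∈ F, |f x y - p y| < δ := by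
  have hopen : IsOpen (⋂ y ∈ F, {q : Y → ℝ | |q y - p y| < δ}) :=
    isOpen_biInter_finset fun y _ => isOpen_lt (by fun_prop) continuous_const
  obtain ⟨_, hx, x, rfl⟩ := mem_closure_iff.1 hp _ hopen (by simp [hδ])
  exact ⟨x, fun y hy => mem_iInter₂.1 hx y hy⟩

variable [TopologicalSpace X] [TopologicalSpace Y]

/-- Points `v n` at which `p` stays at least `6 * δ` away from `p y`, and open sets `U n` of
`δ`-oscillation on which `f` is close to `p` at `y, v 0, …, v (n - 1)`, while the functions
`f (x m)` do not notice that `v n` differs from `y` for `n > m`. It witnesses the discontinuity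
of `p` at `y`. -/
structure DiscontinuitySequence (f : X → Y → ℝ) (p : Y → ℝ) (y : Y) (δ : ℝ) where
  U : ℕ → Set X
  x : ℕ → X
  v : ℕ → Y
  isOpen : ∀ n, IsOpen (U n)
  mem : ∀ n, x n ∈ U n
  oscLE : ∀ n, OscLE f δ (U n)
  left_near : ∀ n, |f (x n) y - p y| < δ
  gap : ∀ n, 6 * δ ≤ |p (v n) - p y|
  left_near_of_lt : ∀ m n, m < n → |f (x n) (v m) - p (v m)| < δ
  right_near_of_lt : ∀ m n, m < n → |f (x m) (v n) - f (x m) y| < δ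

theorem exists_discontinuitySequence (hf : SeparatelyContinuous (Function.uncurry f))
    (hosc : ∀ ε > 0, ∀ U₀ : Set X, IsOpen U₀ → U₀.Nonempty →
      ∃ U ⊆ U₀, IsOpen U ∧ U.Nonempty ∧ OscLE f ε U)
    (hp : p ∈ closure (range f)) {y : Y} (hpy : ¬ ContinuousAt p y) :
    ∃ δ > 0, Nonempty (DiscontinuitySequence f p y δ) := by
  classical
  obtain ⟨hfY, hfX⟩ := hf
  obtain ⟨r, hr, hgap⟩ : ∃ r > 0, ∃ᶠ v in 𝓝 y, r ≤ |p v - p y| := by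
    simpa [ContinuousAt, Metric.tendsto_nhds, Real.dist_eq] using hpy
  have hδ : 0 < r / 6 := by positivity
  obtain ⟨t, ht, htt⟩ := exists_seq_of_forall_finset_exists
    (fun t : Set X × X × Y => IsOpen t.1 ∧ t.2.1 ∈ t.1 ∧ OscLE f (r / 6) t.1 ∧
      |f t.2.1 y - p y| < r / 6 ∧ 6 * (r / 6) ≤ |p t.2.2 - p y|)
    (fun t t' => |f t'.2.1 t.2.2 - p t.2.2| < r / 6 ∧ |f t.2.1 t'.2.2 - f t.2.1 y| < r / 6)
    fun s _ => by
      let F : Finset Y := insert y (s.image fun t => t.2.2)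
      obtain ⟨x₀, hx₀⟩ := exists_forall_abs_sub_lt_of_mem_closure_range hp F hδ
      obtain ⟨U, hU₀, hU, ⟨x, hx⟩, hUosc⟩ := hosc _ hδ (⋂ z ∈ F, {u | |f u z - p z| < r / 6})
        (isOpen_biInter_finset fun z _ =>
          isOpen_lt ((hfX z).sub continuous_const).abs continuous_const)
        ⟨x₀, mem_iInter₂.2 hx₀⟩
      have hxF (z : Y) (hz : z ∈ F) : |f x z - p z| < r / 6 := mem_iInter₂.1 (hU₀ hx) z hz
      have hev : ∀ᶠ v in 𝓝 y, ∀ t ∈ s, |f t.2.1 v - f t.2.1 y| < r / 6 :=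
        s.eventually_all.2 fun t _ => (hfY t.2.1).continuousAt (Metric.ball_mem_nhds _ hδ)
      obtain ⟨v, hv, hvs⟩ := (hgap.and_eventually hev).exists
      refine ⟨(U, x, v), ⟨hU, hx, hUosc, hxF y (Finset.mem_insert_self _ _), by linarith⟩,
        fun t ht => ⟨hxF _ (Finset.mem_insert_of_mem (Finset.mem_image_of_mem _ ht)), hvs t ht⟩⟩
  exact ⟨r / 6, hδ, ⟨⟨fun n => (t n).1, fun n => (t n).2.1, fun n => (t n).2.2, fun n => (ht n).1,
    fun n => (ht n).2.1, fun n => (ht n).2.2.1, fun n => (ht n).2.2.2.1, fun n => (ht n).2.2.2.2,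
    fun m n h => (htt m n h).1, fun m n h => (htt m n h).2⟩⟩⟩

theorem DiscontinuitySequence.false [CompletelyRegularSpace X] [CompletelyRegularSpace Y] {y : Y}
    (S : DiscontinuitySequence f p y δ) (hX : IsPseudocompact X) (hY : IsPseudocompact Y)
    (hf : SeparatelyContinuous (Function.uncurry f)) (hδ : 0 < δ) : False := by
  obtain ⟨hfY, hfX⟩ := hf
  obtain ⟨a, ha⟩ := hX.exists_setClusterPt S.isOpen fun n => ⟨S.x n, S.mem n⟩
  obtain ⟨b, hb⟩ := hY.exists_forall_mapClusterPt
    (g := fun i : Option ℕ => f (i.elim a S.x)) (fun i => hfY _) S.v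
  have hclosed (z : Y) (c r : ℝ) : IsClosed {u | |f u z - c| ≤ r} :=
    isClosed_le ((hfX z).sub continuous_const).abs continuous_const
  have hav (m : ℕ) : |f a (S.v m) - p (S.v m)| ≤ 2 * δ := by
    refine ha.mem_of_isClosed (hclosed (S.v m) (p (S.v m)) (2 * δ)) ?_
    filter_upwards [eventually_gt_atTop m] with n hmn u hu
    have hux := S.oscLE n u hu (S.x n) (S.mem n) (S.v m)
    have hxp := S.left_near_of_lt m n hmn
    grind
  have hxb (n : ℕ) : |f (S.x n) b - f (S.x n) y| ≤ δ :=
    Metric.isClosed_closedBall.mem_of_mapClusterPt (hb (some n))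
      ((eventually_gt_atTop n).mono fun m hnm => (S.right_near_of_lt n m hnm).le)
  have hab_le : |f a b - p y| ≤ 3 * δ := by
    refine ha.mem_of_isClosed (hclosed b (p y) (3 * δ)) (.of_forall fun n u hu => ?_)
    have hux := S.oscLE n u hu (S.x n) (S.mem n) b
    have hxp := S.left_near n
    have hxbn := hxb n
    grind
  have hab_ge : 4 * δ ≤ |f a b - p y| := by
    refine (isClosed_le continuous_const (by fun_prop) :
      IsClosed {z : ℝ | 4 * δ ≤ |z - p y|}).mem_of_mapClusterPt (hb none) (.of_forall fun n => ?_)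
    have hgap := S.gap n
    have havn := hav n
    grind
  linarith

theorem continuous_of_mem_closure_range [CompletelyRegularSpace X] [CompletelyRegularSpace Y]
    (hX : IsPseudocompact X) (hY : IsPseudocompact Y)
    (hf : SeparatelyContinuous (Function.uncurry f))
    (hosc : ∀ ε > 0, ∀ U₀ : Set X, IsOpen U₀ → U₀.Nonempty →
      ∃ U ⊆ U₀, IsOpen U ∧ U.Nonempty ∧ OscLE f ε U)
    (hp : p ∈ closure (range f)) : Continuous p := by
  refine continuous_iff_continuousAt.2 fun y => by_contra fun hpy => ?_
  obtain ⟨δ, hδ, ⟨S⟩⟩ := exists_discontinuitySequence hf hosc hp hpy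
  exact S.false hX hY hf hδ

theorem exists_oscLE_of_forall_mem_closure_range_continuous [Nonempty X]
    [CompletelyRegularSpace Y] (hY : IsPseudocompact Y) (hf : ∀ y, Continuous fun x => f x y)
    (hM : ∀ x y, |f x y| ≤ M) (hcl : ∀ p ∈ closure (range f), Continuous p) (hε : 0 < ε) :
    ∃ U : Set X, IsOpen U ∧ U.Nonempty ∧ OscLE f ε U := by
  have hbound : closure (range f) ⊆ univ.pi fun _ => Icc (-M) M :=
    (isClosed_set_pi fun _ _ => isClosed_Icc).closure_subset_iff.2
      (range_subset_iff.2 fun x => mem_univ_pi.2 fun y => abs_le.1 (hM x y))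
  have : CompactSpace (closure (range f)) := isCompact_iff_compactSpace.1
    ((isCompact_univ_pi fun _ => isCompact_Icc).of_isClosed_subset isClosed_closure hbound)
  let incl (x : X) : closure (range f) := ⟨f x, subset_closure (mem_range_self x)⟩
  have hincl : Continuous incl := (continuous_pi hf).subtype_mk _
  have hdense : DenseRange incl :=
    Subtype.dense_iff.2 (by rw [← range_comp]; exact Subset.rfl)
  obtain ⟨K, -, hK, hKne, hKosc⟩ := exists_oscLE_of_compactSpace
    (f := fun q : closure (range f) => q.1) hY
    ⟨fun q => hcl q.1 q.2, fun y => (continuous_apply y).comp continuous_subtype_val⟩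
    (fun q y => abs_le.2 (mem_univ_pi.1 (hbound q.2) y)) hε isOpen_univ
    ⟨incl (Classical.arbitrary X), mem_univ _⟩
  exact ⟨incl ⁻¹' K, hK.preimage hincl, hdense.exists_mem_open hK hKne,
    fun u hu u' hu' => hKosc _ hu _ hu'⟩

end ClosureRange

section Group

variable {S G : Type*} [Monoid S] [TopologicalSpace S] [CompletelyRegularSpace S]
  [Group G] [TopologicalSpace G] {ι : G →* S}

theorem exists_oscLE_comp_mul (hsep : SeparatelyContinuous fun p : S × S => p.1 * p.2)
    (hqc : QuasiContinuous fun p : S × S => p.1 * p.2) (hpc : IsPseudocompact S)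
    (hι : Continuous ι) (φ : C(S, ℝ)) {ε : ℝ} (hε : 0 < ε) :
    ∃ N : Set G, IsOpen N ∧ N.Nonempty ∧ OscLE (fun g y => φ (ι g * y)) ε N := by
  obtain ⟨hmul_right, hmul_left⟩ := hsep
  obtain ⟨M, hM⟩ := hpc φ φ.continuous
  have hφsep : SeparatelyContinuous (Function.uncurry fun x y : S => φ (x * y)) :=
    ⟨fun x => φ.continuous.comp (hmul_right x), fun y => φ.continuous.comp (hmul_left y)⟩
  have hφqc : QuasiContinuous (Function.uncurry fun x y : S => φ (x * y)) :=
    hqc.continuous_comp φ.continuous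
  refine exists_oscLE_of_forall_mem_closure_range_continuous hpc
    (fun y => (hφsep.2 y).comp hι) (fun g y => hM (ι g * y)) (fun p hp => ?_) hε
  exact continuous_of_mem_closure_range hpc hpc hφsep
    (fun δ hδ U₀ hU₀ hne => exists_oscLE_of_quasiContinuous hpc hpc hφsep hφqc
      (fun x y => hM (x * y)) hδ hU₀ hne)
    (closure_mono (range_comp_subset_range ι fun x y => φ (x * y)) hp)

theorem tendstoUniformly_comp_mul (hsep : SeparatelyContinuous fun p : S × S => p.1 * p.2)
    (hqc : QuasiContinuous fun p : S × S => p.1 * p.2) (hpc : IsPseudocompact S)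
    (hι : IsInducing ι) (φ : C(S, ℝ)) (g : G) :
    TendstoUniformly (fun a y => φ (ι a * y)) (fun y => φ (ι g * y)) (𝓝 g) := by
  refine Metric.tendstoUniformly_iff.2 fun ε hε => ?_
  obtain ⟨N, hN, ⟨g₀, hg₀⟩, hosc⟩ :=
    exists_oscLE_comp_mul hsep hqc hpc hι.continuous φ (half_pos hε)
  have hmul : Continuous fun a : G => a * (g⁻¹ * g₀) := hι.continuous_iff.2 <| by
    simpa [Function.comp_def] using (hsep.2 (ι (g⁻¹ * g₀))).comp hι.continuous
  filter_upwards [(hN.preimage hmul).mem_nhds (by simpa using hg₀)] with a ha y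
  have hle : |φ (ι g * y) - φ (ι a * y)| ≤ ε / 2 := by
    simpa [← mul_assoc, ← map_mul] using hosc g₀ hg₀ _ ha (ι (g₀⁻¹ * g) * y)
  exact hle.trans_lt (half_lt_self hε)

theorem isTopologicalGroup_of_isInducing
    (hsep : SeparatelyContinuous fun p : S × S => p.1 * p.2)
    (hqc : QuasiContinuous fun p : S × S => p.1 * p.2) (hpc : IsPseudocompact S)
    (hι : IsInducing ι) : IsTopologicalGroup G where
  continuous_mul := by
    refine continuous_iff_continuousAt.2 fun ⟨g, h⟩ => hι.continuousAt_iff.2 <|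
      tendsto_of_forall_continuousMap fun φ => ?_
    have hunif : TendstoUniformly (fun (p : G × G) y => φ (ι p.1 * y)) (fun y => φ (ι g * y))
        (𝓝 (g, h)) := fun u hu => (continuous_fst.tendsto (g, h)).eventually
      (tendstoUniformly_comp_mul hsep hqc hpc hι φ g u hu)
    have hcont : Continuous fun y => φ (ι g * y) := φ.continuous.comp (hsep.1 (ι g))
    simpa using hunif.tendsto_comp hcont.continuousAt
      (hι.continuous.comp continuous_snd).continuousAt
  continuous_inv := by
    refine continuous_iff_continuousAt.2 fun g => hι.continuousAt_iff.2 <|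
      tendsto_of_forall_continuousMap fun φ => Metric.tendsto_nhds.2 fun ε hε => ?_
    let ψ : C(S, ℝ) := ⟨fun y => φ (ι g⁻¹ * y), φ.continuous.comp (hsep.1 (ι g⁻¹))⟩
    filter_upwards [Metric.tendstoUniformly_iff.1 (tendstoUniformly_comp_mul hsep hqc hpc hι ψ g)
      ε hε] with a ha
    simpa [ψ, ← mul_assoc, ← map_mul, dist_comm] using ha (ι a⁻¹)

end Group

theorem subgroup_of_pseudocompact_quasicontinuous_monoid_topological
    {S : Type*} [Monoid S] [TopologicalSpace S] [T35Space S]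
    (hsep : SeparatelyContinuous fun p : S × S => p.1 * p.2)
    (hqc : QuasiContinuous fun p : S × S => p.1 * p.2)
    (hpc : IsPseudocompact S)
    (G : Set S) (hone : (1 : S) ∈ G)
    (hmulclosed : ∀ a ∈ G, ∀ b ∈ G, a * b ∈ G)
    (hinv : ∀ g ∈ G, ∃ h ∈ G, g * h = 1 ∧ h * g = 1) :
    Continuous (fun p : G × G => (p.1 : S) * (p.2 : S)) ∧
    ∃ inv : G → G, (∀ g : G, (g : S) * (inv g : S) = 1 ∧ (inv g : S) * (g : S) = 1) ∧
      Continuous inv := by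
  choose inv hinvG hmul_inv hinv_mul using hinv
  let _ : Group G :=
    { mul := fun a b => ⟨a * b, hmulclosed a a.2 b b.2⟩
      one := ⟨1, hone⟩
      inv := fun a => ⟨inv a a.2, hinvG a a.2⟩
      mul_assoc := fun a b c => Subtype.ext (mul_assoc (a : S) b c)
      one_mul := fun a => Subtype.ext (one_mul (a : S))
      mul_one := fun a => Subtype.ext (mul_one (a : S))
      inv_mul_cancel := fun a => Subtype.ext (hinv_mul a a.2) }
  let ι : G →* S := { toFun := Subtype.val, map_one' := rfl, map_mul' := fun _ _ => rfl }
  have : IsTopologicalGroup G :=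
    isTopologicalGroup_of_isInducing (ι := ι) hsep hqc hpc IsInducing.subtypeVal
  exact ⟨continuous_subtype_val.comp continuous_mul, fun g => g⁻¹,
    fun g => ⟨hmul_inv g g.2, hinv_mul g g.2⟩, continuous_inv⟩
end
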